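/- arXiv:1711.02504 — 2 statements merged into one kernel-verified Lean document; each statement's English description precedes it below -/
import Mathlib

section
/- Let (p_n) be a sequence of integers with p_n ≥ 2 for all n and p_n → ∞, and let (κ_n) be a sequence in (0,∞) with κ_n/p_n → ξ for some ξ > 0. Set c_ξ := 1/2 + √(1/4 + ξ²). Then e₁(p_n,κ_n) → ξ/c_ξ, the sequence p_n ẽ₂(p_n,κ_n) is bounded, and f₂(p_n,κ_n) → 1/c_ξ as n → ∞. -/
open MeasureTheory intervalIntegral Filter

/-- `mInt p κ ℓ = ∫_{-1}^1 u^ℓ (1-u²)^{(p-3)/2} exp(κ u) du`. -/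
noncomputable def mInt (p : ℕ) (κ : ℝ) (ℓ : ℕ) : ℝ :=
  ∫ u in (-1 : ℝ)..1, u ^ ℓ * (1 - u ^ 2) ^ (((p : ℝ) - 3) / 2) * Real.exp (κ * u)

/-- `e₁(p,κ) = E[U]` under `FvML_p(θ,κ)`. -/
noncomputable def e1 (p : ℕ) (κ : ℝ) : ℝ := mInt p κ 1 / mInt p κ 0

/-- `e₂(p,κ) = E[U²]` under `FvML_p(θ,κ)`. -/
noncomputable def e2 (p : ℕ) (κ : ℝ) : ℝ := mInt p κ 2 / mInt p κ 0

/-- `ẽ₂(p,κ) = Var[U]` under `FvML_p(θ,κ)`. -/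
noncomputable def etilde2 (p : ℕ) (κ : ℝ) : ℝ := e2 p κ - (e1 p κ) ^ 2

/-- `f₂(p,κ) = E[1-U²]` under `FvML_p(θ,κ)`. -/
noncomputable def f2 (p : ℕ) (κ : ℝ) : ℝ := 1 - e2 p κ

/-- The unnormalised density is continuous as soon as the exponent is nonnegative. -/
lemma continuous_mInt_integrand {p : ℕ} (hp : 3 ≤ p) (κ : ℝ) (ℓ : ℕ) :
    Continuous fun u : ℝ =>
      u ^ ℓ * (1 - u ^ 2) ^ (((p : ℝ) - 3) / 2) * Real.exp (κ * u) := by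
  have h3 : (3 : ℝ) ≤ p := by exact_mod_cast hp
  have hw : Continuous fun u : ℝ => (1 - u ^ 2) ^ (((p : ℝ) - 3) / 2) :=
    (by fun_prop : Continuous fun u : ℝ => 1 - u ^ 2).rpow_const fun _ => Or.inr (by linarith)
  fun_prop

lemma integral_cubic_mul_weight {p : ℕ} (hp : 3 ≤ p) (κ A B C D : ℝ) :
    ∫ u in (-1 : ℝ)..1, (A + B * u + C * u ^ 2 + D * u ^ 3) *
        ((1 - u ^ 2) ^ (((p : ℝ) - 3) / 2) * Real.exp (κ * u)) =
      A * mInt p κ 0 + B * mInt p κ 1 + C * mInt p κ 2 + D * mInt p κ 3 := by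
  have hi (c : ℝ) (ℓ : ℕ) : IntervalIntegrable (fun u : ℝ =>
      c * (u ^ ℓ * (1 - u ^ 2) ^ (((p : ℝ) - 3) / 2) * Real.exp (κ * u))) volume (-1) 1 :=
    ((continuous_mInt_integrand hp κ ℓ).const_mul c).intervalIntegrable _ _
  simp only [mInt, ← intervalIntegral.integral_const_mul]
  rw [← integral_add (hi A 0) (hi B 1), ← integral_add ((hi A 0).add (hi B 1)) (hi C 2),
    ← integral_add (((hi A 0).add (hi B 1)).add (hi C 2)) (hi D 3)]
  refine integral_congr fun u _ => ?_
  ring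

lemma cubic_moments_nonneg {p : ℕ} (hp : 3 ≤ p) {κ A B C D : ℝ}
    (h : ∀ u : ℝ, -1 ≤ u → u ≤ 1 → 0 ≤ A + B * u + C * u ^ 2 + D * u ^ 3) :
    0 ≤ A * mInt p κ 0 + B * mInt p κ 1 + C * mInt p κ 2 + D * mInt p κ 3 := by
  rw [← integral_cubic_mul_weight hp]
  refine integral_nonneg (by norm_num) fun u hu => mul_nonneg (h u hu.1 hu.2) ?_
  have : 0 ≤ 1 - u ^ 2 := by nlinarith [hu.1, hu.2]
  positivity

lemma mInt_zero_pos {p : ℕ} (hp : 3 ≤ p) (κ : ℝ) : 0 < mInt p κ 0 := by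
  refine intervalIntegral_pos_of_pos_on
    ((continuous_mInt_integrand hp κ 0).intervalIntegrable _ _) (fun u hu => ?_) (by norm_num)
  have : 0 < 1 - u ^ 2 := by nlinarith [hu.1, hu.2]
  positivity

/-- Integration by parts against the affine test function `A + B u`. -/
lemma mInt_integration_by_parts {p : ℕ} (hp : 3 ≤ p) (κ A B : ℝ) :
    (B + A * κ) * mInt p κ 0 + (B * κ - A * (p - 1)) * mInt p κ 1
      + (-B * p - A * κ) * mInt p κ 2 + (-B * κ) * mInt p κ 3 = 0 := by
  have h3 : (3 : ℝ) ≤ p := by exact_mod_cast hp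
  rw [← integral_cubic_mul_weight hp]
  have hderiv : ∀ u ∈ Set.uIcc (-1 : ℝ) 1, HasDerivAt
      (fun u : ℝ => (A + B * u) * ((1 - u ^ 2) ^ (((p : ℝ) - 1) / 2) * Real.exp (κ * u)))
      ((B + A * κ + (B * κ - A * (p - 1)) * u + (-B * p - A * κ) * u ^ 2 + (-B * κ) * u ^ 3) *
        ((1 - u ^ 2) ^ (((p : ℝ) - 3) / 2) * Real.exp (κ * u))) u := by
    intro u hu
    rw [Set.uIcc_of_le (by norm_num)] at hu
    have hnn : 0 ≤ 1 - u ^ 2 := by nlinarith [hu.1, hu.2]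
    have h1 : HasDerivAt (fun u : ℝ => 1 - u ^ 2) (-(2 * u)) u := by
      simpa using (hasDerivAt_pow 2 u).const_sub 1
    have h2 := h1.rpow_const (p := ((p : ℝ) - 1) / 2) (Or.inr (by linarith))
    have h4 : HasDerivAt (fun u : ℝ => Real.exp (κ * u)) (Real.exp (κ * u) * κ) u := by
      simpa using ((hasDerivAt_id u).const_mul κ).exp
    have h5 : HasDerivAt (fun u : ℝ => A + B * u) B u := by
      simpa using ((hasDerivAt_id u).const_mul B).const_add A
    have hsplit : (1 - u ^ 2) ^ (((p : ℝ) - 1) / 2) =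
        (1 - u ^ 2) ^ (((p : ℝ) - 3) / 2) * (1 - u ^ 2) := by
      rw [show ((p : ℝ) - 1) / 2 = ((p : ℝ) - 3) / 2 + 1 by ring,
        Real.rpow_add_one' hnn (by linarith)]
    refine (h5.mul (h2.mul h4)).congr_deriv ?_
    simp only [Pi.mul_apply]
    rw [hsplit, show ((p : ℝ) - 1) / 2 - 1 = ((p : ℝ) - 3) / 2 by ring]
    ring
  rw [integral_eq_sub_of_hasDerivAt hderiv]
  · have hne : ((p : ℝ) - 1) / 2 ≠ 0 := by linarith
    simp [Real.zero_rpow hne]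
  · apply Continuous.intervalIntegrable
    have := continuous_mInt_integrand hp κ 0
    simp only [pow_zero, one_mul] at this
    fun_prop

lemma kappa_mul_f2 {p : ℕ} (hp : 3 ≤ p) (κ : ℝ) : κ * f2 p κ = (p - 1) * e1 p κ := by
  have h := mInt_integration_by_parts hp κ 1 0
  have h0 := mInt_zero_pos hp κ
  unfold f2 e2 e1
  field_simp
  linarith

/-- The second moment about the zero `r` of `κ u² + (p - 1) u - κ` in `[0, 1]` is `O(1 / p)`. -/
lemma second_moment_about_root_le {p : ℕ} (hp : 3 ≤ p) {κ r : ℝ} (hκ : 0 < κ) (hr : 0 ≤ r)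
    (hr1 : r ≤ 1) (hroot : κ * r ^ 2 + (p - 1) * r - κ = 0) :
    (p - 1) / 2 * (e2 p κ - 2 * r * e1 p κ + r ^ 2) ≤ 1 := by
  have h3 : (3 : ℝ) ≤ p := by exact_mod_cast hp
  have h0 := mInt_zero_pos hp κ
  have hparts := mInt_integration_by_parts hp κ (-r) 1
  have hm2 : 0 ≤ mInt p κ 2 := by
    simpa using cubic_moments_nonneg hp (κ := κ) (A := 0) (B := 0) (C := 1) (D := 0)
      fun u _ _ => by nlinarith [sq_nonneg u]
  have hslope : κ * (1 - r) ≤ (p - 1) / 2 := by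
    by_contra! hlt
    nlinarith
  have hquad := cubic_moments_nonneg hp (κ := κ)
    (A := r * κ - (p - 1) / 2 * r ^ 2) (B := -κ)
    (C := p - 1 - r * κ - (p - 1) / 2) (D := κ) fun u hu _ => by
      have hfac : r * κ - (p - 1) / 2 * r ^ 2 + -κ * u
          + (p - 1 - r * κ - (p - 1) / 2) * u ^ 2 + κ * u ^ 3
          = (u - r) ^ 2 * (κ * (u + r) + (p - 1) / 2) := by
        linear_combination (u - r) * hroot
      rw [hfac]
      refine mul_nonneg (sq_nonneg _) ?_
      nlinarith
  have hexp : (p - 1) / 2 * (e2 p κ - 2 * r * e1 p κ + r ^ 2)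
      = (p - 1) / 2 * (mInt p κ 2 - 2 * r * mInt p κ 1 + r ^ 2 * mInt p κ 0) / mInt p κ 0 := by
    unfold e2 e1
    field_simp
  rw [hexp, div_le_one h0]
  linarith

lemma etilde2_nonneg {p : ℕ} (hp : 3 ≤ p) (κ : ℝ) : 0 ≤ etilde2 p κ := by
  have h0 := mInt_zero_pos hp κ
  have h := cubic_moments_nonneg hp (κ := κ) (A := e1 p κ ^ 2) (B := -2 * e1 p κ) (C := 1) (D := 0)
    fun u _ _ => by nlinarith [sq_nonneg (u - e1 p κ)]
  have h1 : mInt p κ 1 = e1 p κ * mInt p κ 0 := by unfold e1; field_simp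
  have h2 : mInt p κ 2 = e2 p κ * mInt p κ 0 := by unfold e2; field_simp
  rw [h1, h2] at h
  refine nonneg_of_mul_nonneg_left (b := mInt p κ 0) ?_ h0
  unfold etilde2
  linarith

/-- The zero in `[0, 1]` of `κ u² + (p - 1) u - κ`. -/
noncomputable def modeRoot (p : ℕ) (κ : ℝ) : ℝ :=
  2 / ((p - 1) / κ + Real.sqrt (((p - 1) / κ) ^ 2 + 4))

lemma modeRoot_spec {p : ℕ} (hp : 3 ≤ p) {κ : ℝ} (hκ : 0 < κ) :
    0 ≤ modeRoot p κ ∧ modeRoot p κ ≤ 1 ∧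
      κ * modeRoot p κ ^ 2 + (p - 1) * modeRoot p κ - κ = 0 := by
  have h3 : (3 : ℝ) ≤ p := by exact_mod_cast hp
  unfold modeRoot
  have hq : (p - 1 : ℝ) = (p - 1) / κ * κ := by field_simp
  have hq0 : 0 < (p - 1) / κ := div_pos (by linarith) hκ
  generalize ((p : ℝ) - 1) / κ = q at hq hq0 ⊢
  have hs : Real.sqrt (q ^ 2 + 4) ^ 2 = q ^ 2 + 4 := Real.sq_sqrt (by positivity)
  have hs2 : 2 ≤ Real.sqrt (q ^ 2 + 4) := Real.le_sqrt_of_sq_le (by nlinarith)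
  set s := Real.sqrt (q ^ 2 + 4)
  have hpos : 0 < q + s := by linarith
  refine ⟨by positivity, (div_le_one hpos).2 (by linarith), ?_⟩
  rw [hq]
  field_simp
  linear_combination -κ * hs

lemma sq_e1_sub_modeRoot_add_etilde2_le {p : ℕ} (hp : 3 ≤ p) {κ : ℝ} (hκ : 0 < κ) :
    (p - 1) * ((e1 p κ - modeRoot p κ) ^ 2 + etilde2 p κ) ≤ 2 := by
  obtain ⟨h0, h1, hroot⟩ := modeRoot_spec hp hκ
  have h := second_moment_about_root_le hp hκ h0 h1 hroot
  unfold etilde2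
  linarith

theorem moments_regime_kappa_over_p_to_xi (p : ℕ → ℕ) (hp2 : ∀ n, 2 ≤ p n)
    (hp : Tendsto (fun n => (p n : ℝ)) atTop atTop)
    (κ : ℕ → ℝ) (hκ : ∀ n, 0 < κ n) (ξ : ℝ) (hξ : 0 < ξ)
    (hκp : Tendsto (fun n => κ n / (p n : ℝ)) atTop (nhds ξ)) :
    Tendsto (fun n => e1 (p n) (κ n)) atTop
        (nhds (ξ / (1 / 2 + Real.sqrt (1 / 4 + ξ ^ 2)))) ∧
      (∃ C : ℝ, ∀ n, |(p n : ℝ) * etilde2 (p n) (κ n)| ≤ C) ∧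
      Tendsto (fun n => f2 (p n) (κ n)) atTop
        (nhds (1 / (1 / 2 + Real.sqrt (1 / 4 + ξ ^ 2)))) := by
  have hp3 : ∀ᶠ n in atTop, 3 ≤ p n := by
    filter_upwards [hp.eventually_ge_atTop 3] with n hn
    exact_mod_cast hn
  have hinv : Tendsto (fun n => 1 / (p n : ℝ)) atTop (nhds 0) := by
    simpa [Pi.inv_def] using hp.inv_tendsto_atTop
  have hratio : Tendsto (fun n => ((p n : ℝ) - 1) / κ n) atTop (nhds (1 / ξ)) := by
    have h : Tendsto (fun n => (1 - 1 / (p n : ℝ)) / (κ n / p n)) atTop (nhds ((1 - 0) / ξ)) :=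
      (hinv.const_sub 1).div hκp hξ.ne'
    rw [sub_zero] at h
    refine h.congr fun n => ?_
    have h1 : (p n : ℝ) ≠ 0 := by have := hp2 n; positivity
    have h2 := (hκ n).ne'
    field_simp
  have hroot : Tendsto (fun n => modeRoot (p n) (κ n)) atTop
      (nhds (ξ / (1 / 2 + Real.sqrt (1 / 4 + ξ ^ 2)))) := by
    have h : Tendsto (fun n => modeRoot (p n) (κ n)) atTop
        (nhds (2 / (1 / ξ + Real.sqrt ((1 / ξ) ^ 2 + 4)))) :=
      tendsto_const_nhds.div (hratio.add ((hratio.pow 2).add_const 4).sqrt) (by positivity)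
    have hsqrt : Real.sqrt ((1 / ξ) ^ 2 + 4) = 2 / ξ * Real.sqrt (1 / 4 + ξ ^ 2) := by
      rw [Real.sqrt_eq_iff_mul_self_eq (by positivity) (by positivity)]
      have hs := Real.mul_self_sqrt (show (0 : ℝ) ≤ 1 / 4 + ξ ^ 2 by positivity)
      rw [mul_mul_mul_comm, hs]
      field_simp
      ring
    convert h using 2
    rw [hsqrt]
    field_simp
  have hdist : Tendsto (fun n => e1 (p n) (κ n) - modeRoot (p n) (κ n)) atTop (nhds 0) := by
    have hsq : Tendsto (fun n => (e1 (p n) (κ n) - modeRoot (p n) (κ n)) ^ 2) atTop (nhds 0) := by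
      refine squeeze_zero' (.of_forall fun n => sq_nonneg _) ?_
        (by simpa using hinv.const_mul 4)
      filter_upwards [hp3] with n hn
      have h3 : (3 : ℝ) ≤ p n := by exact_mod_cast hn
      have h := sq_e1_sub_modeRoot_add_etilde2_le hn (hκ n)
      have hv := etilde2_nonneg hn (κ n)
      rw [← div_eq_mul_inv, le_div_iff₀ (by linarith)]
      nlinarith [sq_nonneg (e1 (p n) (κ n) - modeRoot (p n) (κ n))]
    rw [tendsto_zero_iff_abs_tendsto_zero]
    simpa [Real.sqrt_sq_eq_abs, Function.comp_def] using hsq.sqrt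
  have he1 : Tendsto (fun n => e1 (p n) (κ n)) atTop
      (nhds (ξ / (1 / 2 + Real.sqrt (1 / 4 + ξ ^ 2)))) := by
    simpa using hdist.add hroot
  refine ⟨he1, ?_, ?_⟩
  · have hbdd : ∀ᶠ n in atTop, |(p n : ℝ) * etilde2 (p n) (κ n)| ≤ 4 := by
      filter_upwards [hp3] with n hn
      have h3 : (3 : ℝ) ≤ p n := by exact_mod_cast hn
      have h := sq_e1_sub_modeRoot_add_etilde2_le hn (hκ n)
      have hv := etilde2_nonneg hn (κ n)
      rw [abs_of_nonneg (by positivity)]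
      nlinarith [sq_nonneg (e1 (p n) (κ n) - modeRoot (p n) (κ n))]
    have hrange : BddAbove (Set.range fun n => |(p n : ℝ) * etilde2 (p n) (κ n)|) :=
      (isBoundedUnder_of_eventually_le hbdd).bddAbove_range
    obtain ⟨C, hC⟩ := hrange
    exact ⟨C, fun n => hC ⟨n, rfl⟩⟩
  · have h := hratio.mul he1
    rw [show 1 / ξ * (ξ / (1 / 2 + Real.sqrt (1 / 4 + ξ ^ 2))) =
      1 / (1 / 2 + Real.sqrt (1 / 4 + ξ ^ 2)) by field_simp] at h
    refine h.congr' ?_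
    filter_upwards [hp3] with n hn
    have h2 := (hκ n).ne'
    have := kappa_mul_f2 hn (κ n)
    field_simp
    linarith
end

section
/- For every integer p ≥ 2 and every real κ > 0, ( 3/2 + 1/p − √((1/2 + 1/p)² + (κ/p)²) ) / ( p ( 1/2 − 1/p + √((1/2 + 1/p)² + (κ/p)²) )² ) ≤ ẽ₂(p,κ) ≤ 1 / ( p ( 1/2 + √(1/4 + (κ/p)²) ) ). -/
open MeasureTheory intervalIntegral

/-- The exponential moment `∫_{-1}^1 u^ℓ (1-u²)^r exp(κ u) du`, for a real exponent `r`. -/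
noncomputable def expMoment (r κ : ℝ) (ℓ : ℕ) : ℝ :=
  ∫ u in (-1 : ℝ)..1, u ^ ℓ * (1 - u ^ 2) ^ r * Real.exp (κ * u)

lemma mInt_eq_expMoment (p : ℕ) (κ : ℝ) (ℓ : ℕ) :
    mInt p κ ℓ = expMoment (((p : ℝ) - 3) / 2) κ ℓ := rfl

lemma intervalIntegrable_one_sub_sq_rpow {r : ℝ} (hr : -1 < r) :
    IntervalIntegrable (fun u : ℝ => (1 - u ^ 2) ^ r) volume (-1) 1 := by
  have right_half : IntervalIntegrable (fun u : ℝ => (1 - u ^ 2) ^ r) volume 0 1 := by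
    have h := ((intervalIntegrable_rpow' (a := 1) (b := 0) hr).comp_sub_left 1)
    simp only [sub_self, sub_zero] at h
    have hc : ContinuousOn (fun u : ℝ => (1 + u) ^ r) (Set.uIcc 0 1) := by
      refine ContinuousOn.rpow_const (by fun_prop) fun u hu => Or.inl ?_
      rw [Set.uIcc_of_le zero_le_one] at hu
      linarith [hu.1]
    refine (h.mul_continuousOn hc).congr fun u hu => ?_
    rw [Set.uIoc_of_le zero_le_one] at hu
    change (1 - u) ^ r * (1 + u) ^ r = (1 - u ^ 2) ^ r
    rw [← Real.mul_rpow (by linarith [hu.2]) (by linarith [hu.1])]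
    ring_nf
  have left_half : IntervalIntegrable (fun u : ℝ => (1 - u ^ 2) ^ r) volume (-1) 0 := by
    have h := (IntervalIntegrable.iff_comp_neg (by simp)).1 right_half
    simpa using h.symm
  exact left_half.trans right_half

lemma intervalIntegrable_mul_one_sub_sq_rpow {r : ℝ} (hr : -1 < r) {f : ℝ → ℝ}
    (hf : Continuous f) :
    IntervalIntegrable (fun u : ℝ => f u * (1 - u ^ 2) ^ r) volume (-1) 1 :=
  (intervalIntegrable_one_sub_sq_rpow hr).continuousOn_mul hf.continuousOn

lemma intervalIntegrable_expMoment {r : ℝ} (hr : -1 < r) (κ : ℝ) (ℓ : ℕ) :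
    IntervalIntegrable (fun u : ℝ => u ^ ℓ * (1 - u ^ 2) ^ r * Real.exp (κ * u))
      volume (-1) 1 := by
  refine (intervalIntegrable_mul_one_sub_sq_rpow hr
    (f := fun u => u ^ ℓ * Real.exp (κ * u)) (by fun_prop)).congr fun u _ => ?_
  ring

lemma one_sub_sq_rpow_add_one {r u : ℝ} (hr : -1 < r) (hu : u ∈ Set.Icc (-1 : ℝ) 1) :
    (1 - u ^ 2) ^ (r + 1) = (1 - u ^ 2) ^ r * (1 - u ^ 2) :=
  Real.rpow_add_one' (by nlinarith [hu.1, hu.2]) (by linarith)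

lemma expMoment_add_one {r : ℝ} (hr : -1 < r) (κ : ℝ) (ℓ : ℕ) :
    expMoment (r + 1) κ ℓ = expMoment r κ ℓ - expMoment r κ (ℓ + 2) := by
  unfold expMoment
  rw [← integral_sub (intervalIntegrable_expMoment hr κ ℓ)
    (intervalIntegrable_expMoment hr κ (ℓ + 2))]
  refine integral_congr fun u hu => ?_
  rw [Set.uIcc_of_le (by norm_num)] at hu
  simp only [one_sub_sq_rpow_add_one hr hu]
  ring

lemma expMoment_zero_pos {r : ℝ} (hr : -1 < r) (κ : ℝ) : 0 < expMoment r κ 0 := by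
  refine intervalIntegral_pos_of_pos_on (intervalIntegrable_expMoment hr κ 0)
    (fun u hu => ?_) (by norm_num)
  have : 0 < 1 - u ^ 2 := by nlinarith [hu.1, hu.2]
  positivity

lemma hasDerivAt_one_sub_sq_rpow_mul_exp {r u : ℝ} (hu : u ∈ Set.Ioo (-1 : ℝ) 1) (κ : ℝ) :
    HasDerivAt (fun u : ℝ => (1 - u ^ 2) ^ (r + 1) * Real.exp (κ * u))
      (κ * ((1 - u ^ 2) ^ (r + 1) * Real.exp (κ * u))
        - 2 * (r + 1) * (u * (1 - u ^ 2) ^ r * Real.exp (κ * u))) u := by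
  have hpos : 0 < 1 - u ^ 2 := by nlinarith [hu.1, hu.2]
  have h1 : HasDerivAt (fun u : ℝ => 1 - u ^ 2) (-(2 * u)) u := by
    simpa using (hasDerivAt_pow 2 u).const_sub 1
  have h2 : HasDerivAt (fun u : ℝ => Real.exp (κ * u)) (Real.exp (κ * u) * κ) u := by
    simpa using ((hasDerivAt_id u).const_mul κ).exp
  refine ((h1.rpow_const (p := r + 1) (Or.inl hpos.ne')).mul h2).congr_deriv ?_
  rw [add_sub_cancel_right]
  ring

lemma continuous_one_sub_sq_rpow_mul_exp {r : ℝ} (hr : -1 < r) (κ : ℝ) :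
    Continuous (fun u : ℝ => (1 - u ^ 2) ^ (r + 1) * Real.exp (κ * u)) :=
  ((by fun_prop : Continuous fun u : ℝ => 1 - u ^ 2).rpow_const
    fun _ => Or.inr (by linarith)).mul (by fun_prop)

/-- Integration by parts against `(1-u²)^(r+1) exp(κ u)`. -/
lemma expMoment_add_one_zero {r : ℝ} (hr : -1 < r) (κ : ℝ) :
    κ * expMoment (r + 1) κ 0 = 2 * (r + 1) * expMoment r κ 1 := by
  have i0 := (intervalIntegrable_expMoment (r := r + 1) (by linarith) κ 0).const_mul κ
  have i1 := (intervalIntegrable_expMoment hr κ 1).const_mul (2 * (r + 1))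
  have h := integral_eq_sub_of_hasDerivAt_of_le (by norm_num : (-1 : ℝ) ≤ 1)
    (continuous_one_sub_sq_rpow_mul_exp hr κ).continuousOn
    (fun u hu => hasDerivAt_one_sub_sq_rpow_mul_exp hu κ)
    (by simpa using i0.sub i1)
  have hz : (0 : ℝ) ^ (r + 1) = 0 := Real.zero_rpow (by linarith)
  have e := integral_sub i0 i1
  rw [intervalIntegral.integral_const_mul, intervalIntegral.integral_const_mul] at e
  simp only [pow_zero, pow_one, one_mul] at e
  simp only [e] at h
  norm_num [hz] at h
  simp only [expMoment, pow_zero, pow_one, one_mul]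
  linarith

/-- Integration by parts against `u (1-u²)^(r+1) exp(κ u)`. -/
lemma expMoment_add_one_zero_add {r : ℝ} (hr : -1 < r) (κ : ℝ) :
    expMoment (r + 1) κ 0 + κ * expMoment (r + 1) κ 1 = 2 * (r + 1) * expMoment r κ 2 := by
  have hr1 : -1 < r + 1 := by linarith
  have i0 := intervalIntegrable_expMoment hr1 κ 0
  have i1 := (intervalIntegrable_expMoment hr1 κ 1).const_mul κ
  have i2 := (intervalIntegrable_expMoment hr κ 2).const_mul (2 * (r + 1))
  have h := integral_eq_sub_of_hasDerivAt_of_le (by norm_num : (-1 : ℝ) ≤ 1)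
    (f := fun u : ℝ => u * ((1 - u ^ 2) ^ (r + 1) * Real.exp (κ * u)))
    (f' := fun u : ℝ => u ^ 0 * (1 - u ^ 2) ^ (r + 1) * Real.exp (κ * u)
      + κ * (u ^ 1 * (1 - u ^ 2) ^ (r + 1) * Real.exp (κ * u))
      - 2 * (r + 1) * (u ^ 2 * (1 - u ^ 2) ^ r * Real.exp (κ * u)))
    (continuous_id.mul (continuous_one_sub_sq_rpow_mul_exp hr κ)).continuousOn
    (fun u hu => by
      refine ((hasDerivAt_id u).mul
        (hasDerivAt_one_sub_sq_rpow_mul_exp (r := r) hu κ)).congr_deriv ?_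
      simp only [id]
      ring)
    ((i0.add i1).sub i2)
  have hz : (0 : ℝ) ^ (r + 1) = 0 := Real.zero_rpow (by linarith)
  rw [integral_sub (i0.add i1) i2, integral_add i0 i1, intervalIntegral.integral_const_mul,
    intervalIntegral.integral_const_mul] at h
  norm_num [hz] at h
  simp only [expMoment, pow_zero, pow_one, one_mul]
  linarith

lemma mul_sinh_mul_cosh_le {κ s t : ℝ} (hκ : 0 ≤ κ) (hs : 0 ≤ s) (hst : s ≤ t) :
    s * Real.sinh (κ * s) * Real.cosh (κ * t) ≤ t * Real.sinh (κ * t) * Real.cosh (κ * s) := by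
  have h1 : 0 ≤ Real.sinh (κ * t - κ * s) :=
    Real.sinh_nonneg_iff.2 (by nlinarith)
  rw [Real.sinh_sub] at h1
  have h2 : 0 ≤ Real.sinh (κ * t) * Real.cosh (κ * s) :=
    mul_nonneg (Real.sinh_nonneg_iff.2 (by nlinarith)) (Real.cosh_pos _).le
  nlinarith [mul_nonneg hs h1, mul_nonneg (sub_nonneg.2 hst) h2]

lemma sq_sub_sq_mul_nonneg {κ t : ℝ} (hκ : 0 ≤ κ) (ht : 0 ≤ t) (u : ℝ) :
    0 ≤ (u ^ 2 - t ^ 2) * (u * Real.sinh (κ * u) * Real.cosh (κ * t)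
      - t * Real.sinh (κ * t) * Real.cosh (κ * u)) := by
  wlog hu : 0 ≤ u generalizing u
  · simpa using this (-u) (by linarith)
  rcases le_total u t with h | h
  · exact mul_nonneg_of_nonpos_of_nonpos (by nlinarith)
      (sub_nonpos.2 (mul_sinh_mul_cosh_le hκ hu h))
  · exact mul_nonneg (by nlinarith) (sub_nonneg.2 (mul_sinh_mul_cosh_le hκ ht h))

/-- The variables `U` and `U²` are nonnegatively correlated. -/
lemma expMoment_one_mul_two_le {r κ : ℝ} (hr : -1 < r) (hκ : 0 ≤ κ) :
    expMoment r κ 1 * expMoment r κ 2 ≤ expMoment r κ 0 * expMoment r κ 3 := by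
  have h0 := expMoment_zero_pos hr κ
  have h2 : 0 ≤ expMoment r κ 2 := by
    refine integral_nonneg (by norm_num) fun u hu => ?_
    have : 0 ≤ 1 - u ^ 2 := by nlinarith [hu.1, hu.2]
    positivity
  set t := √(expMoment r κ 2 / expMoment r κ 0) with ht
  have ht2 : t ^ 2 * expMoment r κ 0 = expMoment r κ 2 := by
    rw [ht, Real.sq_sqrt (by positivity)]
    field_simp
  set C := Real.cosh (κ * t)
  set S := Real.sinh (κ * t)
  let g : ℝ → ℝ := fun u =>
    (u ^ 2 - t ^ 2) * (u * C - t * S) * Real.exp (κ * u) * (1 - u ^ 2) ^ r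
  have hg : IntervalIntegrable g volume (-1) 1 :=
    intervalIntegrable_mul_one_sub_sq_rpow hr
      (f := fun u => (u ^ 2 - t ^ 2) * (u * C - t * S) * Real.exp (κ * u)) (by fun_prop)
  have hg' : IntervalIntegrable (fun u => g (-u)) volume (-1) 1 := by
    simpa using ((IntervalIntegrable.iff_comp_neg (by simp)).1 hg).symm
  have hneg : ∫ u in (-1 : ℝ)..1, g (-u) = ∫ u in (-1 : ℝ)..1, g u := by
    rw [integral_comp_neg]
    simp
  have hnonneg : 0 ≤ ∫ u in (-1 : ℝ)..1, g u := by
    have hsum : 0 ≤ ∫ u in (-1 : ℝ)..1, (g u + g (-u)) := by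
      refine integral_nonneg (by norm_num) fun u hu => ?_
      have hw : 0 ≤ (1 - u ^ 2) ^ r := Real.rpow_nonneg (by nlinarith [hu.1, hu.2]) r
      have key : g u + g (-u) = 2 * ((u ^ 2 - t ^ 2) * (u * Real.sinh (κ * u) * C
          - t * S * Real.cosh (κ * u))) * (1 - u ^ 2) ^ r := by
        simp only [g, Real.sinh_eq (κ * u), Real.cosh_eq (κ * u), neg_sq, mul_neg]
        ring
      rw [key]
      exact mul_nonneg (mul_nonneg zero_le_two
        (sq_sub_sq_mul_nonneg hκ (Real.sqrt_nonneg _) u)) hw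
    rw [integral_add hg hg', hneg] at hsum
    linarith
  have hexpand : ∫ u in (-1 : ℝ)..1, g u
      = (C * expMoment r κ 3 - C * t ^ 2 * expMoment r κ 1)
        - (t * S * expMoment r κ 2 - t ^ 3 * S * expMoment r κ 0) := by
    have i := intervalIntegrable_expMoment hr κ
    unfold expMoment
    simp only [← intervalIntegral.integral_const_mul]
    rw [← integral_sub ((i 3).const_mul _) ((i 1).const_mul _),
      ← integral_sub ((i 2).const_mul _) ((i 0).const_mul _),
      ← integral_sub (((i 3).const_mul _).sub ((i 1).const_mul _))
        (((i 2).const_mul _).sub ((i 0).const_mul _))]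
    refine integral_congr fun u _ => ?_
    simp only [g]
    ring
  have hfactor : 0 ≤ C * (expMoment r κ 3 - t ^ 2 * expMoment r κ 1) := by
    have : t * S * expMoment r κ 2 = t ^ 3 * S * expMoment r κ 0 := by rw [← ht2]; ring
    nlinarith
  have h3 := nonneg_of_mul_nonneg_right hfactor (Real.cosh_pos _)
  rw [← ht2]
  nlinarith

lemma expMoment_one_pos {r κ : ℝ} (hr : -1 < r) (hκ : 0 < κ) : 0 < expMoment r κ 1 := by
  have h := expMoment_zero_pos (r := r + 1) (by linarith) κ
  have h' := expMoment_add_one_zero hr κ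
  have : 0 < 2 * (r + 1) * expMoment r κ 1 := h' ▸ mul_pos hκ h
  exact pos_of_mul_pos_right this (by linarith)

/-- The ratio of consecutive moments, `I_{ν+1}(κ) / I_ν(κ)` with `ν = r + 1/2`. -/
noncomputable def momentRatio (r κ : ℝ) : ℝ := expMoment r κ 1 / expMoment r κ 0

lemma momentRatio_pos {r κ : ℝ} (hr : -1 < r) (hκ : 0 < κ) : 0 < momentRatio r κ :=
  div_pos (expMoment_one_pos hr hκ) (expMoment_zero_pos hr κ)

lemma expMoment_two_div {r κ : ℝ} (hr : -1 < r) (hκ : 0 < κ) :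
    expMoment r κ 2 / expMoment r κ 0 = 1 - 2 * (r + 1) * momentRatio r κ / κ := by
  have h0 := expMoment_zero_pos hr κ
  have h1 := expMoment_add_one_zero hr κ
  rw [expMoment_add_one hr κ 0] at h1
  rw [momentRatio]
  field_simp
  linarith

lemma inv_momentRatio {r κ : ℝ} (hr : -1 < r) (hκ : 0 < κ) :
    (momentRatio r κ)⁻¹ = (2 * r + 3) / κ + momentRatio (r + 1) κ := by
  have h0 := expMoment_zero_pos hr κ
  have h1 := expMoment_one_pos hr hκ
  have h0' := expMoment_zero_pos (r := r + 1) (by linarith) κ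
  have e0 := expMoment_add_one_zero hr κ
  have e1 := expMoment_add_one_zero_add hr κ
  have e2 := expMoment_add_one hr κ 0
  have e3 : κ * expMoment (r + 1) κ 1
      = 2 * (r + 1) * expMoment r κ 0 - (2 * r + 3) * expMoment (r + 1) κ 0 := by
    linear_combination e1 + 2 * (r + 1) * e2
  rw [momentRatio, momentRatio, inv_div]
  field_simp
  linear_combination expMoment r κ 0 * e0 - expMoment r κ 1 * e3

lemma momentRatio_add_one_le {r κ : ℝ} (hr : -1 < r) (hκ : 0 < κ) :
    momentRatio (r + 1) κ ≤ momentRatio r κ := by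
  have h0 := expMoment_zero_pos hr κ
  have h0' := expMoment_zero_pos (r := r + 1) (by linarith) κ
  rw [momentRatio, momentRatio, div_le_div_iff₀ h0' h0, expMoment_add_one hr κ 0,
    expMoment_add_one hr κ 1]
  nlinarith [expMoment_one_mul_two_le hr hκ.le]

/-- An Amos-type lower bound for `momentRatio`. -/
lemma sqrt_le_mul_momentRatio_add {r κ c : ℝ} (hr : -1 < r) (hκ : 0 < κ) (hc : 0 < c) :
    √(((2 * r + 3) / (2 * c)) ^ 2 + (κ / c) ^ 2)
      ≤ κ / c * momentRatio r κ + (2 * r + 3) / (2 * c) := by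
  have hx := momentRatio_pos hr hκ
  have h := inv_momentRatio hr hκ
  have hle : (momentRatio r κ)⁻¹ ≤ (2 * r + 3) / κ + momentRatio r κ :=
    h.trans_le (by gcongr; exact momentRatio_add_one_le hr hκ)
  have hq : 0 < 2 * r + 3 := by linarith
  rw [Real.sqrt_le_left (by positivity)]
  have hmul : κ ≤ (2 * r + 3) * momentRatio r κ + κ * momentRatio r κ ^ 2 := by
    have := mul_le_mul_of_nonneg_left hle (mul_pos hκ hx).le
    field_simp at this
    nlinarith
  have : (κ / c * momentRatio r κ + (2 * r + 3) / (2 * c)) ^ 2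
      - (((2 * r + 3) / (2 * c)) ^ 2 + (κ / c) ^ 2)
      = κ / c ^ 2 * ((2 * r + 3) * momentRatio r κ + κ * momentRatio r κ ^ 2 - κ) := by
    field_simp
    ring
  have hnn := mul_nonneg (by positivity : 0 ≤ κ / c ^ 2) (sub_nonneg.2 hmul)
  linarith

lemma etilde2_eq {p : ℕ} (hp : 2 ≤ p) {κ : ℝ} (hκ : 0 < κ) :
    etilde2 p κ = 1 - (p - 1) * momentRatio ((p - 3) / 2) κ / κ
      - momentRatio ((p - 3) / 2) κ ^ 2 := by
  have hp' : (2 : ℝ) ≤ p := by exact_mod_cast hp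
  rw [etilde2, e1, e2]
  simp only [mInt_eq_expMoment]
  rw [expMoment_two_div (by linarith) hκ, ← momentRatio]
  ring

theorem etilde2_bounds (p : ℕ) (hp : 2 ≤ p) (κ : ℝ) (hκ : 0 < κ) :
    (3 / 2 + 1 / p - Real.sqrt ((1 / 2 + 1 / p) ^ 2 + (κ / p) ^ 2)) /
        ((p : ℝ) * (1 / 2 - 1 / p + Real.sqrt ((1 / 2 + 1 / p) ^ 2 + (κ / p) ^ 2)) ^ 2) ≤
      etilde2 p κ ∧
      etilde2 p κ ≤ 1 / ((p : ℝ) * (1 / 2 + Real.sqrt (1 / 4 + (κ / p) ^ 2))) := by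
  have hp' : (2 : ℝ) ≤ p := by exact_mod_cast hp
  have hp0 : (0 : ℝ) < p := by linarith
  have hr : -1 < ((p : ℝ) - 3) / 2 := by linarith
  have hx := momentRatio_pos hr hκ
  have hS := sqrt_le_mul_momentRatio_add hr hκ hp0
  have hT := sqrt_le_mul_momentRatio_add (r := ((p : ℝ) - 3) / 2 + 1) (by linarith) hκ hp0
  have hinv := inv_momentRatio hr hκ
  rw [etilde2_eq hp hκ]
  set x := momentRatio (((p : ℝ) - 3) / 2) κ
  set y := momentRatio (((p : ℝ) - 3) / 2 + 1) κ
  rw [show (2 * (((p : ℝ) - 3) / 2) + 3) / (2 * p) = 1 / 2 by field_simp; ring] at hS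
  rw [show (2 * (((p : ℝ) - 3) / 2 + 1) + 3) / (2 * p) = 1 / 2 + 1 / p by
    field_simp; ring] at hT
  rw [show 2 * (((p : ℝ) - 3) / 2) + 3 = p by ring] at hinv
  rw [show ((1 : ℝ) / 2) ^ 2 = 1 / 4 by norm_num] at hS
  set S := √(1 / 4 + (κ / p) ^ 2)
  set T := √((1 / 2 + 1 / (p : ℝ)) ^ 2 + (κ / p) ^ 2)
  have hSsq : S ^ 2 = 1 / 4 + (κ / p) ^ 2 := Real.sq_sqrt (by positivity)
  have hTsq : T ^ 2 = (1 / 2 + 1 / (p : ℝ)) ^ 2 + (κ / p) ^ 2 := Real.sq_sqrt (by positivity)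
  have hS0 : 0 ≤ S := Real.sqrt_nonneg _
  have hT0 : 0 ≤ T := Real.sqrt_nonneg _
  obtain ⟨k, hk⟩ : ∃ k, k = κ / p := ⟨_, rfl⟩
  obtain ⟨i, hi⟩ : ∃ i, i = 1 / (p : ℝ) := ⟨_, rfl⟩
  have hk0 : 0 < k := hk ▸ by positivity
  have hi0 : 0 < i := hi ▸ by positivity
  have hi2 : i ≤ 1 / 2 := hi ▸ one_div_le_one_div_of_le two_pos hp'
  have hpi : (p : ℝ) = 1 / i := by rw [hi]; simp
  have hκk : κ = k / i := by rw [hk, hi]; field_simp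
  rw [← hk] at hS hT hSsq hTsq
  rw [← hi] at hT hTsq ⊢
  have hcoef : ((p : ℝ) - 1) * x / κ = (1 - i) * x / k := by
    rw [hpi, hκk]
    field_simp
  have hxy : k = x + k * x * y := by
    rw [hpi, hκk] at hinv
    field_simp at hinv
    linarith
  rw [hcoef, hpi]
  have hanti : ∀ {a b : ℝ}, 0 < a → a ≤ b →
      1 - (1 - i) * b / k - b ^ 2 ≤ 1 - (1 - i) * a / k - a ^ 2 := by
    intro a b ha hab
    have : (1 - i) * a / k ≤ (1 - i) * b / k := by
      gcongr
      linarith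
    have : a ^ 2 ≤ b ^ 2 := by gcongr
    linarith
  constructor
  · have hTpos : 0 < T := by
      refine lt_of_le_of_ne hT0 fun h => ?_
      rw [← h] at hTsq
      nlinarith [sq_nonneg (1 / 2 + i)]
    have hD : 0 < 1 / 2 - i + T := by linarith
    have hxB : x ≤ k / (1 / 2 - i + T) := by
      rw [le_div_iff₀ hD]
      nlinarith
    refine le_trans (le_of_eq ?_) (hanti hx hxB)
    obtain ⟨D, hTD⟩ : ∃ D, T = D - 1 / 2 + i := ⟨1 / 2 - i + T, by ring⟩
    have hD' : 1 / 2 - i + T = D := by rw [hTD]; ring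
    rw [hD'] at hD ⊢
    rw [hTD] at hTsq ⊢
    field_simp
    linear_combination (-2) * hTsq
  · have hxL : (S - 1 / 2) / k ≤ x := by
      rw [div_le_iff₀ hk0]
      linarith
    have hS2 : 1 / 2 < S := by nlinarith
    have hL0 : 0 < (S - 1 / 2) / k := div_pos (by linarith) hk0
    refine (hanti hL0 hxL).trans (le_of_eq ?_)
    obtain ⟨a, hSa⟩ : ∃ a, S = a + 1 / 2 := ⟨S - 1 / 2, by ring⟩
    have ha : 0 < a := by linarith
    have hk2 : k ^ 2 = a * (a + 1) := by rw [hSa] at hSsq; linear_combination -hSsq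
    have hsum : 1 / 2 + S = a + 1 := by rw [hSa]; ring
    have hvar : 1 - (1 - i) * (a / k) / k - (a / k) ^ 2
        = 1 - ((1 - i) * a + a ^ 2) / k ^ 2 := by
      field_simp
      ring
    rw [hsum, hSa, add_sub_cancel_right, hvar, hk2]
    field_simp
    ring
end
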